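/- Let U ∈ ℝ^{N×(k−1)} have rank k−1 with first column 1/√N (2 ≤ k ≤ N), and suppose the graph is connected. Then the set X_U** of local minima of the ℓ1 variation S on X_U = {x : U^⊤x = 0, ‖x‖ = 1} is contained in X_U* = ∪_{M ∈ M_U*} (X_U ∩ span M); in particular X_U** is a finite set. -/

import Mathlib

/-!
The proof is a perturbation argument inside the linear cone on which `S` is linear. Let `x` be a
local minimum and let `v` satisfy `Uᵀv = 0` and be constant on the level sets of `x`. For small `t`
of either sign, `x + t v` orders the coordinates as `x` does, so `S (x + t v) = S x + t s` with
a slope `s` independent of `t` (`eventually_l1Var_add_smul`). If `v ⟂ x` and `v ≠ 0`, choose the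
sign of `t` with `t s ≤ 0`: normalizing multiplies by `1 / √(1 + t² ‖v‖²) < 1`, and `S x > 0` because
the graph is connected and `x` is not constant (`l1Var_pos`), so `S` strictly decreases,
contradicting minimality. Hence such a `v` is always a multiple of `x` (`rigidity`).

For the partition matrix `M` of `x`, the vectors `M z` are exactly those constant on the level sets
of `x`, so rigidity says that `ker (Uᵀ M)` is a line. Rigidity also gives finiteness: two local
minima with the same level-set partition are unit vectors on a common line, and there are finitely
many partitions of `Fin N`.
-/

open Matrix

/-- The ℓ¹ norm variation `S(x) = ∑_{1 ≤ i < j ≤ N} w_{ij} |x_i - x_j|` of a graph signal. -/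
noncomputable def l1Var {N : ℕ} (W : Matrix (Fin N) (Fin N) ℝ) (x : Fin N → ℝ) : ℝ :=
  ∑ i : Fin N, ∑ j : Fin N, if i < j then W i j * |x i - x j| else 0

/-- `M ∈ ℝ^{N×m}` is the partition matrix of `x ∈ ℝ^N`: its columns are the indicator
vectors of the level sets of `x`, ordered by increasing value, each value being attained. -/
def IsPartitionMatrixOf {N m : ℕ} (x : Fin N → ℝ) (M : Matrix (Fin N) (Fin m) ℝ) : Prop :=
  ∃ a : Fin m → ℝ, StrictMono a ∧ (∀ i, ∃ j, x i = a j) ∧ (∀ j, ∃ i, x i = a j) ∧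
    ∀ i j, M i j = if x i = a j then (1 : ℝ) else 0

lemma l1Var_nonneg {N : ℕ} {W : Matrix (Fin N) (Fin N) ℝ} (hW : ∀ i j, 0 ≤ W i j)
    (x : Fin N → ℝ) : 0 ≤ l1Var W x := by
  refine Finset.sum_nonneg fun i _ => Finset.sum_nonneg fun j _ => ?_
  split_ifs
  · exact mul_nonneg (hW i j) (abs_nonneg _)
  · exact le_rfl

lemma l1Var_smul {N : ℕ} (W : Matrix (Fin N) (Fin N) ℝ) {c : ℝ} (hc : 0 ≤ c)
    (x : Fin N → ℝ) : l1Var W (c • x) = c * l1Var W x := by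
  simp only [l1Var, Finset.mul_sum]
  refine Finset.sum_congr rfl fun i _ => Finset.sum_congr rfl fun j _ => ?_
  split_ifs
  · simp only [Pi.smul_apply, smul_eq_mul]
    rw [← mul_sub, abs_mul, abs_of_nonneg hc]
    ring
  · simp

/-- On a connected graph the variation vanishes only at constant signals, and the only constant
signal with zero sum is `0`. -/
lemma l1Var_pos {N : ℕ} {W : Matrix (Fin N) (Fin N) ℝ} (hsymm : W.IsSymm)
    (hW : ∀ i j, 0 ≤ W i j)
    (hconn : (SimpleGraph.fromRel fun i j : Fin N => 0 < W i j).Connected)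
    {x : Fin N → ℝ} (hsum : ∑ i, x i = 0) (hx : x ≠ 0) : 0 < l1Var W x := by
  refine lt_of_le_of_ne (l1Var_nonneg hW x) fun h0 => hx ?_
  have hnn : ∀ i j : Fin N, 0 ≤ if i < j then W i j * |x i - x j| else 0 := fun i j => by
    split_ifs
    · exact mul_nonneg (hW i j) (abs_nonneg _)
    · exact le_rfl
  have hlt : ∀ i j : Fin N, i < j → 0 < W i j → x i = x j := by
    intro i j hij hw
    have h1 := (Finset.sum_eq_zero_iff_of_nonneg
      (fun i _ => Finset.sum_nonneg fun j _ => hnn i j)).1 h0.symm i (Finset.mem_univ _)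
    have h2 := (Finset.sum_eq_zero_iff_of_nonneg (fun j _ => hnn i j)).1 h1 j (Finset.mem_univ _)
    rw [if_pos hij] at h2
    rcases mul_eq_zero.1 h2 with h | h
    · exact absurd h hw.ne'
    · exact sub_eq_zero.1 (abs_eq_zero.1 h)
  have hadj : ∀ i j : Fin N,
      (SimpleGraph.fromRel fun i j : Fin N => 0 < W i j).Adj i j → x i = x j := by
    intro i j h
    rw [SimpleGraph.fromRel_adj] at h
    have hw : 0 < W i j := h.2.elim id fun h' => by rwa [hsymm.apply i j] at h'
    rcases lt_or_gt_of_ne h.1 with hij | hij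
    · exact hlt i j hij hw
    · exact (hlt j i hij (by rwa [hsymm.apply i j])).symm
  have hconst : ∀ i j, x i = x j := by
    intro i j
    obtain ⟨p⟩ := hconn.preconnected i j
    induction p with
    | nil => rfl
    | cons h _ ih => exact (hadj _ _ h).trans ih
  funext i
  have h : ∑ j, x j = N * x i := by
    rw [Finset.sum_congr rfl fun j _ => hconst j i]
    simp
  have hN : (N : ℝ) ≠ 0 := by
    have := i.pos
    positivity
  rw [hsum] at h
  simpa [hN] using h.symm

/-- If `v` is constant on the level sets of `x`, then `t ↦ S (x + t v)` is linear near `t = 0`,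
because small perturbations do not change the sign of any difference of coordinates. -/
lemma eventually_l1Var_add_smul {N : ℕ} (W : Matrix (Fin N) (Fin N) ℝ) {x v : Fin N → ℝ}
    (hv : ∀ i j, x i = x j → v i = v j) :
    ∃ s : ℝ, ∀ᶠ t in nhds (0 : ℝ), l1Var W (x + t • v) = l1Var W x + t * s := by
  have key : ∀ i j, ∃ s : ℝ, ∀ᶠ t in nhds (0 : ℝ),
      |(x + t • v) i - (x + t • v) j| = |x i - x j| + t * s := by
    intro i j
    have hc : Filter.Tendsto (fun t : ℝ => (x + t • v) i - (x + t • v) j) (nhds 0)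
        (nhds (x i - x j)) := by
      have : Continuous (fun t : ℝ => (x i + t * v i) - (x j + t * v j)) := by fun_prop
      simpa using this.tendsto 0
    rcases lt_trichotomy (x i - x j) 0 with h | h | h
    · refine ⟨-(v i - v j), (hc.eventually (gt_mem_nhds h)).mono fun t ht => ?_⟩
      rw [abs_of_neg ht, abs_of_neg h]
      simp only [Pi.add_apply, Pi.smul_apply, smul_eq_mul]
      ring
    · refine ⟨0, Filter.Eventually.of_forall fun t => ?_⟩
      have hx := sub_eq_zero.1 h
      simp [hx, hv i j hx]
    · refine ⟨v i - v j, (hc.eventually (lt_mem_nhds h)).mono fun t ht => ?_⟩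
      rw [abs_of_pos ht, abs_of_pos h]
      simp only [Pi.add_apply, Pi.smul_apply, smul_eq_mul]
      ring
  choose s hs using key
  refine ⟨∑ i, ∑ j, if i < j then W i j * s i j else 0, ?_⟩
  have hall : ∀ᶠ t in nhds (0 : ℝ), ∀ i j,
      |(x + t • v) i - (x + t • v) j| = |x i - x j| + t * s i j :=
    Filter.eventually_all.2 fun i => Filter.eventually_all.2 fun j => hs i j
  refine hall.mono fun t ht => ?_
  simp only [l1Var, Finset.mul_sum, ← Finset.sum_add_distrib]
  refine Finset.sum_congr rfl fun i _ => Finset.sum_congr rfl fun j _ => ?_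
  split_ifs
  · rw [ht i j]
    ring
  · simp

/-- At a local minimum `x` of `S` on the unit sphere of a subspace `ker A` of zero-sum vectors, every
vector of `ker A` that is constant on the level sets of `x` is a multiple of `x`. -/
lemma rigidity {N : ℕ} {ι : Type*} {W : Matrix (Fin N) (Fin N) ℝ} (hsymm : W.IsSymm)
    (hW : ∀ i j, 0 ≤ W i j)
    (hconn : (SimpleGraph.fromRel fun i j : Fin N => 0 < W i j).Connected)
    {A : Matrix ι (Fin N) ℝ} (hA : ∀ y, A.mulVec y = 0 → ∑ i, y i = 0)
    {x : Fin N → ℝ} (hx : A.mulVec x = 0) (hnorm : ∑ i, x i ^ 2 = 1)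
    {ε : ℝ} (hε : 0 < ε)
    (hmin : ∀ y, A.mulVec y = 0 → ∑ i, y i ^ 2 = 1 →
      Real.sqrt (∑ i, (y i - x i) ^ 2) < ε → l1Var W x ≤ l1Var W y)
    {v : Fin N → ℝ} (hv : A.mulVec v = 0) (hlev : ∀ i j, x i = x j → v i = v j) :
    ∃ c : ℝ, c • x = v := by
  -- `u` is the component of `v` orthogonal to `x`.
  set c : ℝ := ∑ i, x i * v i with hc
  set u : Fin N → ℝ := v - c • x with hu
  refine ⟨c, ?_⟩
  by_contra hne
  have hAu : A.mulVec u = 0 := by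
    rw [hu, Matrix.mulVec_sub, Matrix.mulVec_smul, hx, hv]
    simp
  have hulev : ∀ i j, x i = x j → u i = u j := by
    intro i j hij
    simp [hu, hij, hlev i j hij]
  have horth : ∑ i, x i * u i = 0 := by
    have : ∑ i, x i * u i = ∑ i, x i * v i - c * ∑ i, x i ^ 2 := by
      rw [Finset.mul_sum, ← Finset.sum_sub_distrib]
      refine Finset.sum_congr rfl fun i _ => ?_
      simp only [hu, Pi.sub_apply, Pi.smul_apply, smul_eq_mul]
      ring
    rw [this, hnorm, ← hc]
    ring
  set q : ℝ := ∑ i, u i ^ 2 with hq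
  have hqpos : 0 < q := by
    refine lt_of_le_of_ne (Finset.sum_nonneg fun i _ => sq_nonneg _) fun h0 => hne ?_
    funext i
    have h := (Finset.sum_eq_zero_iff_of_nonneg (fun i _ => sq_nonneg (u i))).1 h0.symm i
      (Finset.mem_univ _)
    have h' : v i - c * x i = 0 := by simpa [hu] using h
    simp only [Pi.smul_apply, smul_eq_mul]
    linarith
  have hx0 : x ≠ 0 := by
    rintro rfl
    simp at hnorm
  have hSpos := l1Var_pos hsymm hW hconn (hA x hx) hx0
  obtain ⟨s, hs⟩ := eventually_l1Var_add_smul W hulev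
  -- `y t` is the normalization of `x + t u`.
  set y : ℝ → Fin N → ℝ := fun t => (Real.sqrt (1 + t ^ 2 * q))⁻¹ • (x + t • u) with hy
  have hpos : ∀ t : ℝ, 0 < 1 + t ^ 2 * q := fun t => by positivity
  have hclose : ∀ᶠ t in nhds (0 : ℝ), Real.sqrt (∑ i, (y t i - x i) ^ 2) < ε := by
    have hcont : Continuous fun t : ℝ => Real.sqrt (∑ i, (y t i - x i) ^ 2) := by
      have hinv : Continuous fun t : ℝ => (Real.sqrt (1 + t ^ 2 * q))⁻¹ :=
        Continuous.inv₀ (by fun_prop) fun t => (Real.sqrt_pos.2 (hpos t)).ne'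
      simp only [hy, Pi.smul_apply, Pi.add_apply, smul_eq_mul]
      fun_prop
    have h0 : Real.sqrt (∑ i, (y 0 i - x i) ^ 2) = 0 := by simp [hy]
    exact (hcont.tendsto 0).eventually (gt_mem_nhds (by rwa [h0]))
  obtain ⟨δ, hδ, hball⟩ := Metric.eventually_nhds_iff.1 (hs.and hclose)
  obtain ⟨t, ht0, htδ, hts⟩ : ∃ t : ℝ, t ≠ 0 ∧ dist t 0 < δ ∧ t * s ≤ 0 := by
    rcases le_total s 0 with h | h
    · refine ⟨δ / 2, by positivity, ?_, mul_nonpos_of_nonneg_of_nonpos (by positivity) h⟩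
      rw [Real.dist_0_eq_abs, abs_of_pos (by positivity)]
      linarith
    · refine ⟨-(δ / 2), by simp [hδ.ne'], ?_, mul_nonpos_of_nonpos_of_nonneg (by linarith) h⟩
      rw [Real.dist_0_eq_abs, abs_neg, abs_of_pos (by positivity)]
      linarith
  obtain ⟨hlin, hdist⟩ := hball htδ
  have hAy : A.mulVec (y t) = 0 := by
    simp only [hy]
    rw [Matrix.mulVec_smul, Matrix.mulVec_add, Matrix.mulVec_smul, hx, hAu]
    simp
  have hnormy : ∑ i, y t i ^ 2 = 1 := by
    have h1 : ∑ i, (x i + t * u i) ^ 2 = 1 + t ^ 2 * q := by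
      have : ∑ i, (x i + t * u i) ^ 2
          = ∑ i, x i ^ 2 + 2 * t * ∑ i, x i * u i + t ^ 2 * ∑ i, u i ^ 2 := by
        simp only [Finset.mul_sum, ← Finset.sum_add_distrib]
        exact Finset.sum_congr rfl fun i _ => by ring
      rw [this, hnorm, horth]
      ring
    simp only [hy, Pi.smul_apply, Pi.add_apply, smul_eq_mul, mul_pow, ← Finset.mul_sum]
    rw [h1, inv_pow, Real.sq_sqrt (hpos t).le, inv_mul_cancel₀ (hpos t).ne']
  have hle := hmin (y t) hAy hnormy hdist
  have hr : (Real.sqrt (1 + t ^ 2 * q))⁻¹ < 1 := by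
    refine inv_lt_one_of_one_lt₀ (Real.lt_sqrt_of_sq_lt ?_)
    have : 0 < t ^ 2 * q := by positivity
    linarith
  have hr0 : 0 < (Real.sqrt (1 + t ^ 2 * q))⁻¹ := inv_pos.2 (Real.sqrt_pos.2 (hpos t))
  have hSy : l1Var W (y t) = (Real.sqrt (1 + t ^ 2 * q))⁻¹ * (l1Var W x + t * s) := by
    simp only [hy]
    rw [l1Var_smul W hr0.le, hlin]
  rw [hSy] at hle
  nlinarith [mul_nonneg hr0.le (neg_nonneg.2 hts), mul_pos hSpos (sub_pos.2 hr)]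

lemma exists_isPartitionMatrixOf {N : ℕ} (x : Fin N → ℝ) :
    ∃ (m : ℕ) (M : Matrix (Fin N) (Fin m) ℝ), IsPartitionMatrixOf x M := by
  let s : Finset ℝ := Finset.univ.image x
  let a := s.orderEmbOfFin rfl
  have hr : Set.range a = s := Finset.range_orderEmbOfFin s rfl
  refine ⟨s.card, Matrix.of fun i j => if x i = a j then 1 else 0, a, a.strictMono, ?_, ?_,
    fun i j => rfl⟩
  · intro i
    have : x i ∈ Set.range a := by
      rw [hr]
      simp [s]
    obtain ⟨j, hj⟩ := this
    exact ⟨j, hj.symm⟩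
  · intro j
    have : a j ∈ (s : Set ℝ) := hr ▸ Set.mem_range_self j
    simpa [s] using this

set_option maxHeartbeats 1000000 in
/-- For a connected graph and `U ∈ ℝ^{N×(k-1)}` of rank `k-1` with first
column `1/√N` (`2 ≤ k ≤ N`), the set `X_U**` of local minima of the ℓ¹ variation `S` on
`X_U = {x : Uᵀx = 0, ‖x‖ = 1}` is contained in `X_U* = ⋃_{M ∈ M_U*} (X_U ∩ span M)`;
in particular `X_U**` is finite. -/
theorem local_minima_subset_critical_and_finite (N k : ℕ) (hk2 : 2 ≤ k) (hkN : k ≤ N)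
    (W : Matrix (Fin N) (Fin N) ℝ)
    (hsymm : W.IsSymm) (hnonneg : ∀ i j, 0 ≤ W i j) (hdiag : ∀ i, W i i = 0)
    (hconn : (SimpleGraph.fromRel fun i j : Fin N => 0 < W i j).Connected)
    (U : Matrix (Fin N) (Fin (k - 1)) ℝ)
    (hrank : U.rank = k - 1)
    (hcol : ∀ i, U i ⟨0, by omega⟩ = 1 / Real.sqrt N)
    (XU : Set (Fin N → ℝ))
    (hXU : XU = {x | U.transpose.mulVec x = 0 ∧ Real.sqrt (∑ i, x i ^ 2) = 1})
    (MUstar : Set ((m : ℕ) × Matrix (Fin N) (Fin m) ℝ))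
    (hMUstar : MUstar = {p | ∃ x ∈ XU, IsPartitionMatrixOf x p.2 ∧
      Module.finrank ℝ (LinearMap.ker (U.transpose * p.2).mulVecLin) = 1})
    (XUstar : Set (Fin N → ℝ))
    (hXUstar : XUstar = {x | ∃ p ∈ MUstar, x ∈ XU ∧ ∃ y : Fin p.1 → ℝ, x = p.2.mulVec y})
    (XUlocmin : Set (Fin N → ℝ))
    (hXUlocmin : XUlocmin = {x | x ∈ XU ∧ ∃ ε > 0, ∀ x' ∈ XU,
      Real.sqrt (∑ i, (x' i - x i) ^ 2) < ε → l1Var W x ≤ l1Var W x'}) :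
    XUlocmin ⊆ XUstar ∧ XUlocmin.Finite := by
  have hN : 0 < N := by omega
  have hsum : ∀ y, U.transpose.mulVec y = 0 → ∑ i, y i = 0 := by
    intro y hy
    have h := congrFun hy ⟨0, by omega⟩
    simp only [Matrix.mulVec, dotProduct, Matrix.transpose_apply, hcol, ← Finset.mul_sum,
      Pi.zero_apply] at h
    have h2 : (1 / Real.sqrt N : ℝ) ≠ 0 := by positivity
    exact (mul_eq_zero.1 h).resolve_left h2
  have hloc : ∀ x ∈ XUlocmin, U.transpose.mulVec x = 0 ∧ ∑ i, x i ^ 2 = 1 ∧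
      ∀ v, U.transpose.mulVec v = 0 → (∀ i j, x i = x j → v i = v j) → ∃ c : ℝ, c • x = v := by
    intro x hx
    simp only [hXUlocmin, hXU, Set.mem_ofPred_eq, Real.sqrt_eq_one] at hx
    obtain ⟨⟨hx1, hx2⟩, ε, hε, hmin⟩ := hx
    exact ⟨hx1, hx2, fun v hv hlev => rigidity hsymm hnonneg hconn hsum hx1 hx2 hε
      (fun y h1 h2 h3 => hmin y ⟨h1, h2⟩ h3) hv hlev⟩
  constructor
  · intro x hx
    obtain ⟨hx1, hx2, hrig⟩ := hloc x hx
    have hxXU : x ∈ XU := by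
      rw [hXU]
      exact ⟨hx1, Real.sqrt_eq_one.2 hx2⟩
    obtain ⟨m, M, hM⟩ := exists_isPartitionMatrixOf x
    obtain ⟨a, ha, h1, h2, h3⟩ := id hM
    have hval : ∀ (z : Fin m → ℝ) i j, x i = a j → M.mulVec z i = z j := by
      intro z i j hij
      simp [Matrix.mulVec, dotProduct, h3, hij, ha.injective.eq_iff]
    have hxa : M.mulVec a = x := by
      funext i
      obtain ⟨j, hj⟩ := h1 i
      rw [hval a i j hj, hj]
    rw [hXUstar]
    refine ⟨⟨m, M⟩, ?_, hxXU, a, hxa.symm⟩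
    rw [hMUstar]
    refine ⟨x, hxXU, hM, ?_⟩
    have hmem : ∀ z, z ∈ LinearMap.ker (U.transpose * M).mulVecLin ↔
        U.transpose.mulVec (M.mulVec z) = 0 := by
      intro z
      rw [LinearMap.mem_ker, Matrix.mulVecLin_apply, Matrix.mulVec_mulVec]
    have ha0 : a ≠ 0 := by
      rintro rfl
      rw [Matrix.mulVec_zero] at hxa
      simp [← hxa] at hx2
    refine (finrank_eq_one_iff_of_nonzero'
      (⟨a, (hmem a).2 (by rw [hxa, hx1])⟩ : LinearMap.ker (U.transpose * M).mulVecLin)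
      (fun h => ha0 (congrArg Subtype.val h))).2 ?_
    rintro ⟨z, hz⟩
    obtain ⟨c, hc⟩ := hrig (M.mulVec z) ((hmem z).1 hz) (by
      intro i i' hii
      obtain ⟨j, hj⟩ := h1 i
      rw [hval z i j hj, hval z i' j (hii ▸ hj)])
    refine ⟨c, Subtype.ext ?_⟩
    funext j
    obtain ⟨i, hi⟩ := h2 j
    have h := congrFun hc i
    rw [hval z i j hi] at h
    simpa [hi] using h
  · -- The level-set partition takes finitely many values, and its fibers lie in some `{x, -x}`.
    let P : (Fin N → ℝ) → Set (Fin N × Fin N) := fun x => {p | x p.1 = x p.2}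
    refine Set.Finite.of_finite_fibers P (Set.toFinite _) ?_
    rintro _ ⟨x, hx, rfl⟩
    obtain ⟨hx1, hx2, hrig⟩ := hloc x hx
    refine (Set.toFinite {x, -x}).subset ?_
    rintro y ⟨hy, hyx⟩
    obtain ⟨hy1, hy2, -⟩ := hloc y hy
    have hP : P y = P x := hyx
    obtain ⟨c, rfl⟩ := hrig y hy1 fun i j hij => by
      have : (i, j) ∈ P y := by
        rw [hP]
        exact hij
      exact this
    have hc : c ^ 2 = 1 := by
      simpa [mul_pow, ← Finset.mul_sum, hx2] using hy2
    rcases sq_eq_one_iff.1 hc with rfl | rfl <;> simp
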